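/- There is a constant C, depending only on the dimension n, with the following property. Let n ≥ 2, let u : ℝⁿ → ℝⁿ be a Schwartz vector field with ∇·u = 0 everywhere, and let d : ℝⁿ → ℝ³ be smooth with ∇d a Schwartz function. Then | ∫_{ℝⁿ} Δ(u·∇d)·Δd dx | ≤ C ‖∇d‖_{L^∞} ( ‖Δu‖_{L²} ‖Δd‖_{L²} + ‖∇u‖_{L²} ‖∇Δd‖_{L²} ). -/

import Mathlib

open MeasureTheory Real

noncomputable section

/-- `pd i f x` is the `i`-th partial derivative `∂ᵢ f (x)` of `f : ℝⁿ → ℝ`. -/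
def pd {n : ℕ} (i : Fin n) (f : EuclideanSpace ℝ (Fin n) → ℝ)
    (x : EuclideanSpace ℝ (Fin n)) : ℝ :=
  fderiv ℝ f x (EuclideanSpace.single i 1)

/-- `lap f x` is the Laplacian `Δf(x) = Σᵢ ∂ᵢ∂ᵢ f (x)`. -/
def lap {n : ℕ} (f : EuclideanSpace ℝ (Fin n) → ℝ)
    (x : EuclideanSpace ℝ (Fin n)) : ℝ :=
  ∑ i, pd i (fun y => pd i f y) x

/-- ‖∇d‖_{L^∞}: essential supremum of |∇d| for d : ℝⁿ → ℝ³. -/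
def gradLinf {n : ℕ} (d : EuclideanSpace ℝ (Fin n) → EuclideanSpace ℝ (Fin 3)) : ℝ :=
  essSup (fun x => Real.sqrt (∑ i, ∑ k : Fin 3, (pd i (fun z => d z k) x) ^ 2)) volume

/-- ‖Δd‖_{L²} for d : ℝⁿ → ℝ³. -/
def lapL2 {n : ℕ} (d : EuclideanSpace ℝ (Fin n) → EuclideanSpace ℝ (Fin 3)) : ℝ :=
  Real.sqrt (∑ k : Fin 3, ∫ x, (lap (fun z => d z k) x) ^ 2)

/-- ‖∇²d‖_{L²} for d : ℝⁿ → ℝ³. -/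
def hessL2 {n : ℕ} (d : EuclideanSpace ℝ (Fin n) → EuclideanSpace ℝ (Fin 3)) : ℝ :=
  Real.sqrt (∑ i, ∑ j, ∑ k : Fin 3, ∫ x, (pd i (pd j (fun z => d z k)) x) ^ 2)

/-- ‖∇Δd‖_{L²} for d : ℝⁿ → ℝ³. -/
def gradLapL2 {n : ℕ} (d : EuclideanSpace ℝ (Fin n) → EuclideanSpace ℝ (Fin 3)) : ℝ :=
  Real.sqrt (∑ i, ∑ k : Fin 3, ∫ x, (pd i (lap (fun z => d z k)) x) ^ 2)

/-- ‖∇u‖_{L²} for a vector field u : ℝⁿ → ℝⁿ. -/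
def gradL2u {n : ℕ} (u : EuclideanSpace ℝ (Fin n) → EuclideanSpace ℝ (Fin n)) : ℝ :=
  Real.sqrt (∑ i, ∑ j, ∫ x, (pd i (fun y => u y j) x) ^ 2)

/-- ‖Δu‖_{L²} for a vector field u : ℝⁿ → ℝⁿ. -/
def lapL2u {n : ℕ} (u : EuclideanSpace ℝ (Fin n) → EuclideanSpace ℝ (Fin n)) : ℝ :=
  Real.sqrt (∑ i, ∫ x, (lap (fun y => u y i) x) ^ 2)

/-- `f` is (the underlying function of) a Schwartz function. -/
def IsS {n : ℕ} (f : EuclideanSpace ℝ (Fin n) → ℝ) : Prop :=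
  ∃ g : SchwartzMap (EuclideanSpace ℝ (Fin n)) ℝ, ∀ x, g x = f x

namespace IsS

variable {n : ℕ} {f g h : EuclideanSpace ℝ (Fin n) → ℝ}

lemma mul (hf : IsS f) (hg : IsS g) : IsS (fun x => f x * g x) := by
  obtain ⟨F, hF⟩ := hf
  obtain ⟨G, hG⟩ := hg
  refine ⟨SchwartzMap.smulLeftCLM ℝ F G, fun x => ?_⟩
  rw [SchwartzMap.smulLeftCLM_apply_apply F.hasTemperateGrowth, hF, hG, smul_eq_mul]

lemma add (hf : IsS f) (hg : IsS g) : IsS (fun x => f x + g x) := by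
  obtain ⟨F, hF⟩ := hf
  obtain ⟨G, hG⟩ := hg
  exact ⟨F + G, fun x => by simp [hF, hG]⟩

lemma sum {ι : Type} (s : Finset ι) {f : ι → EuclideanSpace ℝ (Fin n) → ℝ}
    (hf : ∀ i, IsS (f i)) : IsS (fun x => ∑ i ∈ s, f i x) := by
  choose F hF using hf
  exact ⟨∑ i ∈ s, F i, fun x => by simp [hF]⟩

lemma pd (i : Fin n) (hf : IsS f) : IsS (pd i f) := by
  obtain ⟨F, hF⟩ := hf
  have : f = F := (funext hF).symm
  subst this
  exact ⟨SchwartzMap.evalCLM ℝ _ _ (EuclideanSpace.single i 1) (SchwartzMap.fderivCLM ℝ _ _ F),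
    fun x => rfl⟩

lemma lap (hf : IsS f) : IsS (lap f) :=
  IsS.sum _ fun i => (hf.pd i).pd i

lemma integrable (hf : IsS f) : Integrable f := by
  obtain ⟨F, hF⟩ := hf
  have : f = F := (funext hF).symm
  subst this
  exact F.integrable

lemma memLp_two (hf : IsS f) : MemLp f 2 := by
  obtain ⟨F, hF⟩ := hf
  have : f = F := (funext hF).symm
  subst this
  exact F.memLp 2

lemma differentiable (hf : IsS f) : Differentiable ℝ f := by
  obtain ⟨F, hF⟩ := hf
  have : f = F := (funext hF).symm
  subst this
  exact F.differentiable

lemma bounded (hf : IsS f) : ∃ C, ∀ x, |f x| ≤ C := by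
  obtain ⟨F, hF⟩ := hf
  have : f = F := (funext hF).symm
  subst this
  obtain ⟨C, _, hC⟩ := F.decay 0 0
  exact ⟨C, fun x => by simpa using hC x⟩

lemma pd_mul (i : Fin n) (hf : IsS f) (hg : IsS g) :
    _root_.pd i (fun x => f x * g x) = fun x => f x * _root_.pd i g x + _root_.pd i f x * g x := by
  funext x
  have := fderiv_fun_mul (hf.differentiable x) (hg.differentiable x)
  simp only [_root_.pd, this]
  simp [mul_comm]

lemma ibp (i : Fin n) (hf : IsS f) (hg : IsS g) :
    ∫ x, f x * _root_.pd i g x = - ∫ x, _root_.pd i f x * g x :=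
  integral_mul_fderiv_eq_neg_fderiv_mul_of_integrable
    ((hf.pd i).mul hg).integrable (hf.mul (hg.pd i)).integrable (hf.mul hg).integrable
    (fun x _ => hf.differentiable x) (fun x _ => hg.differentiable x)

end IsS

section aux

variable {n : ℕ}

lemma pd_add' (i : Fin n) {f g : EuclideanSpace ℝ (Fin n) → ℝ} (hf : IsS f) (hg : IsS g) :
    pd i (fun x => f x + g x) = fun x => pd i f x + pd i g x := by
  funext x
  simp only [pd, fderiv_fun_add (hf.differentiable x) (hg.differentiable x)]
  simp

lemma pd_sum' {ι : Type} (s : Finset ι) (i : Fin n) {f : ι → EuclideanSpace ℝ (Fin n) → ℝ}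
    (hf : ∀ j ∈ s, Differentiable ℝ (f j)) :
    pd i (fun x => ∑ j ∈ s, f j x) = fun x => ∑ j ∈ s, pd i (f j) x := by
  funext x
  simp only [pd, fderiv_fun_sum (fun j hj => hf j hj x)]
  simp

/-- one direction of the main integration by parts -/
lemma one_dir (j : Fin n) {a g w : EuclideanSpace ℝ (Fin n) → ℝ}
    (ha : IsS a) (hg : IsS g) (hw : IsS w) :
    ∫ x, pd j (pd j (fun y => a y * g y)) x * w x =
      - (∫ x, pd j (pd j a) x * g x * w x) - 2 * (∫ x, pd j a x * g x * pd j w x)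
        + ∫ x, a x * pd j (pd j g) x * w x := by
  have e1 : ∀ x, pd j (pd j (fun y => a y * g y)) x * w x =
      pd j (pd j a) x * g x * w x + 2 * (pd j a x * w x * pd j g x)
        + a x * pd j (pd j g) x * w x := by
    intro x
    rw [ha.pd_mul j hg, pd_add' j (ha.mul (hg.pd j)) ((ha.pd j).mul hg),
      ha.pd_mul j (hg.pd j), (ha.pd j).pd_mul j hg]
    ring
  have hA := ((((ha.pd j).pd j).mul hg).mul hw).integrable
  have hB := (((ha.pd j).mul hw).mul (hg.pd j)).integrable
  have hC := ((ha.mul ((hg.pd j).pd j)).mul hw).integrable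
  have hAB : Integrable (fun x => pd j (pd j a) x * g x * w x + 2 * (pd j a x * w x * pd j g x)) :=
    hA.add (hB.const_mul 2)
  have hD := (((ha.pd j).mul hg).mul (hw.pd j)).integrable
  have e2 := ((ha.pd j).mul hw).ibp j hg
  have e3 : ∀ x, pd j (fun y => pd j a y * w y) x * g x =
      pd j a x * g x * pd j w x + pd j (pd j a) x * g x * w x := by
    intro x
    rw [(ha.pd j).pd_mul j hw]
    ring
  simp_rw [e1]
  rw [integral_add hAB hC, integral_add hA (hB.const_mul 2),
    integral_const_mul, e2]
  simp_rw [e3]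
  rw [integral_add hD hA]
  ring

lemma lap_mul_int {a g w : EuclideanSpace ℝ (Fin n) → ℝ}
    (ha : IsS a) (hg : IsS g) (hw : IsS w) :
    ∫ x, lap (fun y => a y * g y) x * w x =
      - (∫ x, lap a x * g x * w x) - 2 * (∑ j, ∫ x, pd j a x * g x * pd j w x)
        + ∫ x, a x * lap g x * w x := by
  simp only [lap, Finset.sum_mul, Finset.mul_sum]
  rw [integral_finsetSum, integral_finsetSum, integral_finsetSum]
  · simp only [one_dir _ ha hg hw, Finset.sum_add_distrib, Finset.sum_sub_distrib,
      Finset.sum_neg_distrib]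
  · exact fun j _ => ((ha.mul ((hg.pd j).pd j)).mul hw).integrable
  · exact fun j _ => ((((ha.pd j).pd j).mul hg).mul hw).integrable
  · exact fun j _ => ((((ha.mul hg).pd j).pd j).mul hw).integrable

lemma pd_contDiff (i : Fin n) {f : EuclideanSpace ℝ (Fin n) → ℝ}
    (hf : ContDiff ℝ (⊤ : ℕ∞) f) : ContDiff ℝ (⊤ : ℕ∞) (pd i f) := by
  have := hf.fderiv_right (m := (⊤ : ℕ∞)) (by simp)
  exact this.clm_apply contDiff_const

lemma pd_comm (i j : Fin n) {f : EuclideanSpace ℝ (Fin n) → ℝ}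
    (hf : ContDiff ℝ (⊤ : ℕ∞) f) : pd i (pd j f) = pd j (pd i f) := by
  have hd : Differentiable ℝ (fderiv ℝ f) :=
    (hf.fderiv_right (m := (⊤ : ℕ∞)) (by simp)).differentiable (by simp)
  have key : ∀ (a b : Fin n) x, pd a (pd b f) x =
      fderiv ℝ (fderiv ℝ f) x (EuclideanSpace.single a 1) (EuclideanSpace.single b 1) := by
    intro a b x
    change fderiv ℝ (fun y => fderiv ℝ f y (EuclideanSpace.single b 1)) x _ = _
    rw [fderiv_clm_apply (hd x) (differentiableAt_const _)]
    simp
  funext x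
  rw [key, key]
  have hs : IsSymmSndFDerivAt ℝ f x :=
    hf.contDiffAt.isSymmSndFDerivAt (by
      rw [minSmoothness_of_isRCLikeNormedField]; exact WithTop.coe_le_coe.2 (le_top : (2 : ℕ∞) ≤ ⊤))
  exact hs _ _

lemma lap_pd (i : Fin n) {f : EuclideanSpace ℝ (Fin n) → ℝ}
    (hf : ContDiff ℝ (⊤ : ℕ∞) f) : lap (pd i f) = pd i (lap f) := by
  have : pd i (lap f) = fun x => ∑ j, pd i (pd j (pd j f)) x :=
    pd_sum' _ i fun j _ => (pd_contDiff j (pd_contDiff j hf)).differentiable (by simp)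
  rw [this]
  funext x
  simp only [lap]
  refine Finset.sum_congr rfl fun j _ => ?_
  change pd j (pd j (pd i f)) x = _
  rw [pd_comm j i hf, pd_comm j i (pd_contDiff j hf)]

lemma transport_zero {u : Fin n → EuclideanSpace ℝ (Fin n) → ℝ}
    {w : EuclideanSpace ℝ (Fin n) → ℝ} (hu : ∀ i, IsS (u i)) (hw : IsS w)
    (hdiv : ∀ x, ∑ i, pd i (u i) x = 0) :
    ∑ i, ∫ x, u i x * pd i w x * w x = 0 := by
  have h1 : ∀ i, 2 * ∫ x, u i x * pd i w x * w x = - ∫ x, pd i (u i) x * (w x * w x) := by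
    intro i
    rw [← (hu i).ibp i (hw.mul hw), hw.pd_mul i hw, ← integral_const_mul]
    congr 1
    funext x
    ring
  have h2 : ∑ i, ∫ x, pd i (u i) x * (w x * w x) = 0 := by
    rw [← integral_finsetSum _ fun i _ => (((hu i).pd i).mul (hw.mul hw)).integrable]
    simp [← Finset.sum_mul, hdiv]
  have h3 : 2 * ∑ i, ∫ x, u i x * pd i w x * w x = 0 := by
    rw [Finset.mul_sum]
    simp only [h1, Finset.sum_neg_distrib, h2, neg_zero]
  linarith

lemma scalar_identity {u : Fin n → EuclideanSpace ℝ (Fin n) → ℝ}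
    {f : EuclideanSpace ℝ (Fin n) → ℝ} (hu : ∀ i, IsS (u i))
    (hdiv : ∀ x, ∑ i, pd i (u i) x = 0) (hf : ContDiff ℝ (⊤ : ℕ∞) f)
    (hg : ∀ i, IsS (pd i f)) :
    ∫ x, lap (fun y => ∑ i, u i y * pd i f y) x * lap f x =
      ∑ i, (- (∫ x, lap (u i) x * pd i f x * lap f x)
        - 2 * (∑ j, ∫ x, pd j (u i) x * pd i f x * pd j (lap f) x)) := by
  have hw : IsS (lap f) := IsS.sum _ fun i => (hg i).pd i
  have e : ∀ x, lap (fun y => ∑ i, u i y * pd i f y) x * lap f x =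
      ∑ i, lap (fun y => u i y * pd i f y) x * lap f x := by
    intro x
    rw [← Finset.sum_mul]
    congr 1
    simp only [lap]
    rw [Finset.sum_comm]
    refine Finset.sum_congr rfl fun j _ => ?_
    rw [pd_sum' _ j fun i _ => ((hu i).mul (hg i)).differentiable]
    rw [pd_sum' _ j fun i _ => (((hu i).mul (hg i)).pd j).differentiable]
  simp_rw [e]
  rw [integral_finsetSum _ fun i _ => (((hu i).mul (hg i)).lap.mul hw).integrable]
  have := transport_zero hu hw hdiv
  simp only [lap_mul_int (hu _) (hg _) hw, Finset.sum_add_distrib]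
  simp only [lap_pd _ hf, this, add_zero]

lemma cs_bound {a g b : EuclideanSpace ℝ (Fin n) → ℝ} {M : ℝ}
    (ha : IsS a) (hg : IsS g) (hb : IsS b) (hM : ∀ᵐ x, |g x| ≤ M) (hM0 : 0 ≤ M) :
    |∫ x, a x * g x * b x| ≤ M * (√(∫ x, a x ^ 2) * √(∫ x, b x ^ 2)) := by
  have h2 : ENNReal.ofReal 2 = 2 := by simp
  have hcs := integral_mul_norm_le_Lp_mul_Lq (μ := volume) (f := a) (g := b)
    Real.HolderConjugate.two_two (by rw [h2]; exact ha.memLp_two) (by rw [h2]; exact hb.memLp_two)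
  have hab : Integrable (fun x => ‖a x‖ * ‖b x‖) := by
    simpa [norm_mul] using (ha.mul hb).integrable.norm
  calc |∫ x, a x * g x * b x| ≤ ∫ x, |a x * g x * b x| := abs_integral_le_integral_abs
    _ ≤ ∫ x, M * (‖a x‖ * ‖b x‖) := by
        refine integral_mono_ae ((ha.mul hg).mul hb).integrable.abs (hab.const_mul M) ?_
        filter_upwards [hM] with x hx
        simp only [abs_mul, Real.norm_eq_abs]
        have : 0 ≤ |a x| * |b x| := by positivity
        nlinarith
    _ = M * ∫ x, ‖a x‖ * ‖b x‖ := integral_const_mul _ _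
    _ ≤ _ := by
        refine mul_le_mul_of_nonneg_left (hcs.trans (le_of_eq ?_)) hM0
        simp [Real.sqrt_eq_rpow]

end aux

/-- |∫ Δ(u·∇d)·Δd| ≤ C ‖∇d‖_{L^∞}(‖Δu‖_{L²}‖Δd‖_{L²} + ‖∇u‖_{L²}‖∇Δd‖_{L²}),
with C depending only on n, for divergence-free Schwartz u. -/
theorem statement13 (n : ℕ) (hn : 2 ≤ n) :
    ∃ C : ℝ, ∀ (u : SchwartzMap (EuclideanSpace ℝ (Fin n)) (EuclideanSpace ℝ (Fin n)))
      (d : EuclideanSpace ℝ (Fin n) → EuclideanSpace ℝ (Fin 3)),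
      (∀ x, ∑ i, pd i (fun y => u y i) x = 0) →
      ContDiff ℝ (⊤ : ℕ∞) d →
      (∀ (i : Fin n) (k : Fin 3),
        ∃ g : SchwartzMap (EuclideanSpace ℝ (Fin n)) ℝ,
          ∀ x, g x = pd i (fun z => d z k) x) →
      |∫ x, ∑ k : Fin 3,
          lap (fun y => ∑ i, u y i * pd i (fun z => d z k) y) x * lap (fun z => d z k) x|
        ≤ C * (gradLinf d *
            (lapL2u (fun y => u y) * lapL2 d + gradL2u (fun y => u y) * gradLapL2 d)) := by
  refine ⟨3 * n + 6 * n * n, ?_⟩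
  intro u d hdiv hd hG
  have hu : ∀ i, IsS (fun y => u y i) := fun i =>
    ⟨SchwartzMap.postcompCLM (𝕜 := ℝ) (EuclideanSpace.proj i) u, fun x => rfl⟩
  have hg : ∀ i k, IsS (pd i (fun z => d z k)) := hG
  have hf : ∀ k, ContDiff ℝ (⊤ : ℕ∞) (fun z => d z k) := fun k =>
    (EuclideanSpace.proj (𝕜 := ℝ) k).contDiff.comp hd
  have hw : ∀ k, IsS (lap (fun z => d z k)) := fun k => IsS.sum _ fun i => (hg i k).pd i
  -- the sup bound
  have hle : ∀ i k x, |pd i (fun z => d z k) x| ≤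
      √(∑ i, ∑ k : Fin 3, (pd i (fun z => d z k) x) ^ 2) := by
    intro i k x
    apply Real.abs_le_sqrt
    calc (pd i (fun z => d z k) x) ^ 2 ≤ ∑ k : Fin 3, (pd i (fun z => d z k) x) ^ 2 :=
          Finset.single_le_sum (f := fun k : Fin 3 => (pd i (fun z => d z k) x) ^ 2)
            (fun _ _ => sq_nonneg _) (Finset.mem_univ k)
      _ ≤ _ := Finset.single_le_sum
            (f := fun i => ∑ k : Fin 3, (pd i (fun z => d z k) x) ^ 2)
            (fun _ _ => Finset.sum_nonneg fun _ _ => sq_nonneg _) (Finset.mem_univ i)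
  have hbd : Filter.IsBoundedUnder (· ≤ ·) (ae volume)
      (fun x => √(∑ i, ∑ k : Fin 3, (pd i (fun z => d z k) x) ^ 2)) := by
    choose B hB using fun i k => (hg i k).bounded
    refine ⟨√(∑ i, ∑ k : Fin 3, (B i k) ^ 2), ?_⟩
    simp only [Filter.eventually_map]
    refine Filter.Eventually.of_forall fun x => Real.sqrt_le_sqrt ?_
    refine Finset.sum_le_sum fun i _ => Finset.sum_le_sum fun k _ => ?_
    rw [← sq_abs]
    exact pow_le_pow_left₀ (abs_nonneg _) (hB i k x) 2
  have hess : ∀ᵐ x, √(∑ i, ∑ k : Fin 3, (pd i (fun z => d z k) x) ^ 2) ≤ gradLinf d :=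
    ae_le_essSup hbd
  have hM : ∀ i k, ∀ᵐ x, |pd i (fun z => d z k) x| ≤ gradLinf d := by
    intro i k
    filter_upwards [hess] with x hx using (hle i k x).trans hx
  have hM0 : 0 ≤ gradLinf d := by
    obtain ⟨x, hx⟩ := hess.exists
    exact (Real.sqrt_nonneg _).trans hx
  set M := gradLinf d
  -- component norms
  have n1 : ∀ i, √(∫ x, (lap (fun y => u y i) x) ^ 2) ≤ lapL2u (fun y => u y) := fun i =>
    Real.sqrt_le_sqrt (Finset.single_le_sum
      (f := fun i => ∫ x, (lap (fun y => u y i) x) ^ 2)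
      (fun _ _ => integral_nonneg fun _ => sq_nonneg _) (Finset.mem_univ i))
  have n2 : ∀ k, √(∫ x, (lap (fun z => d z k) x) ^ 2) ≤ lapL2 d := fun k =>
    Real.sqrt_le_sqrt (Finset.single_le_sum
      (f := fun k : Fin 3 => ∫ x, (lap (fun z => d z k) x) ^ 2)
      (fun _ _ => integral_nonneg fun _ => sq_nonneg _) (Finset.mem_univ k))
  have n3 : ∀ j i, √(∫ x, (pd j (fun y => u y i) x) ^ 2) ≤ gradL2u (fun y => u y) := fun j i =>
    Real.sqrt_le_sqrt ((Finset.single_le_sum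
      (f := fun i => ∫ x, (pd j (fun y => u y i) x) ^ 2)
      (fun _ _ => integral_nonneg fun _ => sq_nonneg _) (Finset.mem_univ i)).trans
      (Finset.single_le_sum
      (f := fun j => ∑ i, ∫ x, (pd j (fun y => u y i) x) ^ 2)
      (fun _ _ => Finset.sum_nonneg fun _ _ => integral_nonneg fun _ => sq_nonneg _)
      (Finset.mem_univ j)))
  have n4 : ∀ j k, √(∫ x, (pd j (lap (fun z => d z k)) x) ^ 2) ≤ gradLapL2 d := fun j k =>
    Real.sqrt_le_sqrt ((Finset.single_le_sum
      (f := fun k : Fin 3 => ∫ x, (pd j (lap (fun z => d z k)) x) ^ 2)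
      (fun _ _ => integral_nonneg fun _ => sq_nonneg _) (Finset.mem_univ k)).trans
      (Finset.single_le_sum
      (f := fun j => ∑ k : Fin 3, ∫ x, (pd j (lap (fun z => d z k)) x) ^ 2)
      (fun _ _ => Finset.sum_nonneg fun _ _ => integral_nonneg fun _ => sq_nonneg _)
      (Finset.mem_univ j)))
  have p1 : 0 ≤ lapL2u (fun y => u y) := Real.sqrt_nonneg _
  have p2 : 0 ≤ lapL2 d := Real.sqrt_nonneg _
  have p3 : 0 ≤ gradL2u (fun y => u y) := Real.sqrt_nonneg _
  have p4 : 0 ≤ gradLapL2 d := Real.sqrt_nonneg _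
  set A := lapL2u (fun y => u y)
  set B := lapL2 d
  set P := gradL2u (fun y => u y)
  set Q := gradLapL2 d
  have b1 : ∀ i k, |∫ x, lap (fun y => u y i) x * pd i (fun z => d z k) x *
      lap (fun z => d z k) x| ≤ M * (A * B) := fun i k =>
    (cs_bound (hu i).lap (hg i k) (hw k) (hM i k) hM0).trans
      (mul_le_mul_of_nonneg_left (mul_le_mul (n1 i) (n2 k) (Real.sqrt_nonneg _) p1) hM0)
  have b2 : ∀ i k j, |∫ x, pd j (fun y => u y i) x * pd i (fun z => d z k) x *
      pd j (lap (fun z => d z k)) x| ≤ M * (P * Q) := fun i k j =>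
    (cs_bound ((hu i).pd j) (hg i k) ((hw k).pd j) (hM i k) hM0).trans
      (mul_le_mul_of_nonneg_left (mul_le_mul (n3 j i) (n4 j k) (Real.sqrt_nonneg _) p3) hM0)
  have b3 : ∀ i k, |∑ j, ∫ x, pd j (fun y => u y i) x * pd i (fun z => d z k) x *
      pd j (lap (fun z => d z k)) x| ≤ n * (M * (P * Q)) := fun i k => by
    refine (Finset.abs_sum_le_sum_abs _ _).trans ((Finset.sum_le_sum fun j _ => b2 i k j).trans ?_)
    simp
  have b4 : ∀ k : Fin 3, |∫ x, lap (fun y => ∑ i, u y i * pd i (fun z => d z k) y) x *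
      lap (fun z => d z k) x| ≤ n * (M * (A * B) + 2 * (n * (M * (P * Q)))) := fun k => by
    rw [scalar_identity (u := fun i y => u y i) hu hdiv (hf k) (fun i => hg i k)]
    refine (Finset.abs_sum_le_sum_abs _ _).trans
      ((Finset.sum_le_sum (g := fun _ => M * (A * B) + 2 * (n * (M * (P * Q)))) fun i _ => ?_).trans
        (by simp [mul_add]))
    have h1 := abs_le.1 (b1 i k)
    have h3 := abs_le.1 (b3 i k)
    rw [abs_le]
    constructor <;> linarith [h1.1, h1.2, h3.1, h3.2]
  have hv : ∀ k : Fin 3, IsS (fun y => ∑ i, u y i * pd i (fun z => d z k) y) := fun k =>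
    IsS.sum _ fun i => (hu i).mul (hg i k)
  rw [integral_finsetSum _ fun k _ => ((hv k).lap.mul (hw k)).integrable]
  refine (Finset.abs_sum_le_sum_abs _ _).trans ((Finset.sum_le_sum fun k _ => b4 k).trans ?_)
  simp only [Finset.sum_const, Finset.card_univ, Fintype.card_fin, nsmul_eq_mul]
  have hn0 : (0 : ℝ) ≤ n := Nat.cast_nonneg n
  have q1 : 0 ≤ (n : ℝ) * n * (M * (A * B)) := by positivity
  have q2 : 0 ≤ (n : ℝ) * (M * (P * Q)) := by positivity
  push_cast
  nlinarith [q1, q2]
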